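/- arXiv:2006.16359 — 3 statements merged into one kernel-verified Lean document; each statement's English description precedes it below -/
import Mathlib

section
/- Let π ∈ S_n avoid 132 and σ ≤ π in the right weak order. The step (σ_i, π⁻¹σ_i) → (σ_{i+1}, π⁻¹σ_{i+1}) points up and to the right (i.e., σ_i < σ_{i+1} and π⁻¹σ_i < π⁻¹σ_{i+1}) if and only if σs_i is not ≤ π in the right weak order. -/
open Equiv

/-- The adjacent transposition `s i`, swapping positions `i` and `i+1` (0-indexed). -/
def simpleT {n : ℕ} (i : Fin n) : Equiv.Perm (Fin (n+1)) := Equiv.swap i.castSucc i.succ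

/-- The inversion set of `σ`: pairs of values `(σ i, σ j)` with `i < j` and `σ i > σ j`. -/
def invSet {m : ℕ} (σ : Equiv.Perm (Fin m)) : Set (Fin m × Fin m) :=
  {p | ∃ i j : Fin m, i < j ∧ σ j < σ i ∧ p = (σ i, σ j)}

/-- The right weak Bruhat order, characterized by containment of inversion sets. -/
def wle {m : ℕ} (σ π : Equiv.Perm (Fin m)) : Prop := invSet σ ⊆ invSet π

/-- `σ` contains the pattern 132. -/
def contains132 {m : ℕ} (σ : Equiv.Perm (Fin m)) : Prop :=
  ∃ i₁ i₂ i₃ : Fin m, i₁ < i₂ ∧ i₂ < i₃ ∧ σ i₁ < σ i₃ ∧ σ i₃ < σ i₂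

/-!
At an ascent `σ i < σ (i+1)`, multiplying by `s i` adds exactly the inversion `(σ (i+1), σ i)`, so
the swap is forbidden iff this pair is not an inversion of `π`, i.e. iff `π⁻¹` keeps its two values
in order. At a descent, multiplying by `s i` removes an inversion, so the swap is always allowed.
-/

theorem mem_invSet_iff {m : ℕ} {σ : Perm (Fin m)} {a b : Fin m} :
    (a, b) ∈ invSet σ ↔ b < a ∧ σ.symm a < σ.symm b := by
  constructor
  · rintro ⟨i, j, hij, hlt, hab⟩
    obtain ⟨rfl, rfl⟩ := Prod.mk.inj hab
    simpa using ⟨hlt, hij⟩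
  · rintro ⟨hba, hlt⟩
    exact ⟨σ.symm a, σ.symm b, hlt, by simpa using hba, by simp⟩

section simpleT

variable {n : ℕ} {i : Fin n} {σ π : Perm (Fin (n + 1))}

theorem simpleT_lt_simpleT_iff {p q : Fin (n + 1)} :
    simpleT i p < simpleT i q ↔
      (p = i.succ ∧ q = i.castSucc) ∨ (p < q ∧ ¬(p = i.castSucc ∧ q = i.succ)) := by
  simp only [simpleT, swap_apply_def, Fin.ext_iff, Fin.lt_def, apply_ite Fin.val,
    Fin.val_castSucc, Fin.val_succ]
  split_ifs <;> omega

theorem invSet_mul_simpleT_of_ascent (hσ : σ i.castSucc < σ i.succ) :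
    invSet (σ * simpleT i) = insert (σ i.succ, σ i.castSucc) (invSet σ) := by
  ext ⟨a, b⟩
  obtain ⟨p, rfl⟩ := σ.surjective a
  obtain ⟨q, rfl⟩ := σ.surjective b
  have symm_apply (r : Fin (n + 1)) : (σ * simpleT i).symm (σ r) = simpleT i r := by
    simp [symm_apply_eq, simpleT]
  simp only [mem_invSet_iff, symm_apply, symm_apply_apply, simpleT_lt_simpleT_iff,
    Set.mem_insert_iff, Prod.mk.injEq, EmbeddingLike.apply_eq_iff_eq]
  constructor
  · rintro ⟨hlt, hpq | ⟨hpq, -⟩⟩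
    · exact .inl hpq
    · exact .inr ⟨hlt, hpq⟩
  · rintro (⟨rfl, rfl⟩ | ⟨hlt, hpq⟩)
    · exact ⟨hσ, .inl ⟨rfl, rfl⟩⟩
    · refine ⟨hlt, .inr ⟨hpq, ?_⟩⟩
      rintro ⟨rfl, rfl⟩
      exact hlt.asymm hσ

theorem wle_mul_simpleT_iff_of_ascent (hσ : σ i.castSucc < σ i.succ) :
    wle (σ * simpleT i) π ↔ (σ i.succ, σ i.castSucc) ∈ invSet π ∧ wle σ π := by
  rw [wle, invSet_mul_simpleT_of_ascent hσ, Set.insert_subset_iff, wle]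

theorem mul_simpleT_wle_of_descent (hσ : σ i.succ < σ i.castSucc) :
    wle (σ * simpleT i) σ := by
  have hascent : (σ * simpleT i) i.castSucc < (σ * simpleT i) i.succ := by
    simpa [simpleT] using hσ
  have hcancel : σ * simpleT i * simpleT i = σ := by simp [simpleT]
  have hinv := invSet_mul_simpleT_of_ascent hascent
  rw [hcancel] at hinv
  rw [wle, hinv]
  exact Set.subset_insert _ _

end simpleT

theorem step_up_right_iff_forbidden_general {n : ℕ} (π σ : Perm (Fin (n + 1)))
    (hσπ : wle σ π) (i : Fin n) :
    (σ i.castSucc < σ i.succ ∧ π.symm (σ i.castSucc) < π.symm (σ i.succ)) ↔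
      ¬ wle (σ * simpleT i) π := by
  have hne : σ i.castSucc ≠ σ i.succ := σ.injective.ne Fin.castSucc_lt_succ.ne
  rcases hne.lt_or_gt with hascent | hdescent
  · have hswap : wle (σ * simpleT i) π ↔ π.symm (σ i.succ) < π.symm (σ i.castSucc) := by
      simp only [wle_mul_simpleT_iff_of_ascent hascent, mem_invSet_iff, hascent, hσπ, true_and,
        and_true]
    rw [hswap, not_lt, (π.symm.injective.ne hne).le_iff_lt]
    exact and_iff_right hascent
  · have hallowed : wle (σ * simpleT i) π := (mul_simpleT_wle_of_descent hdescent).trans hσπ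
    simp only [hdescent.not_gt, false_and, hallowed, not_true_eq_false]

/-- A step of the permutation path points up and to the right iff the corresponding
swap is forbidden, i.e. `σ sᵢ ≰ π`. -/
theorem step_up_right_iff_forbidden {n : ℕ} (π σ : Equiv.Perm (Fin (n+1)))
    (hπ : ¬ contains132 π) (hσπ : wle σ π) (i : Fin n) :
    (σ i.castSucc < σ i.succ ∧ π.symm (σ i.castSucc) < π.symm (σ i.succ)) ↔
      ¬ wle (σ * simpleT i) π :=
  step_up_right_iff_forbidden_general π σ hσπ i
end

section
/- Let V be a finite-dimensional complex representation of sl_2(ℂ) and let V' ⊆ V be a subspace closed under the actions of the standard generators f and h, such that dim(V' ∩ V[k]) = dim(V' ∩ V[-k]) for all integers k, where V[k] is the k-eigenspace of h. Then V' is closed under the action of e, i.e., V' is an sl_2-subrepresentation of V. -/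
open Module

/-!
Write `M[μ]` for the `μ`-eigenspace of `h`. On a finite-dimensional module `e` and `f` are
nilpotent, and the commutation formula for `e` and `fⁿ` shows that `fᵏ : M[k] → M[-k]` is injective,
that `h` has no Jordan blocks, and hence that `h` is diagonalizable with integer eigenvalues.

If `W` is weight-symmetric and stable under `f`, injectivity makes `fᵏ : W ∩ M[k] → W ∩ M[-k]`
bijective. For `v ∈ W ∩ M[k]` with `0 ≤ k`, the vector `fᵏ⁺¹ v` of weight `-(k + 2)` is therefore
`fᵏ⁺² u` for some `u ∈ W ∩ M[k + 2]`. Then `v - f u` is killed by `fᵏ⁺¹`, hence by `e`, and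
`e v = e f u = f e u + (k + 2) u` lies in `W` by downward induction on `k`. Negative weights follow
by applying powers of `f`.
-/

open LieModule (toEnd toEnd_apply_apply)

namespace Sl2Module

section Commutation

variable {R L M : Type*} [CommRing R] [LieRing L] [LieAlgebra R L]
  [AddCommGroup M] [Module R M] [LieRingModule L M] [LieModule R L M] {h e f : L}

lemma lie_h_lie_e (t : IsSl2Triple h e f) (m : M) :
    ⁅h, ⁅e, m⁆⁆ = ⁅e, ⁅h, m⁆⁆ + (2 : R) • ⁅e, m⁆ := by
  rw [leibniz_lie, t.lie_h_e_smul R, smul_lie, add_comm]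

lemma lie_h_pow_toEnd_e_apply (t : IsSl2Triple h e f) (n : ℕ) (m : M) :
    ⁅h, (toEnd R L M e ^ n) m⁆ =
      (toEnd R L M e ^ n) ⁅h, m⁆ + (2 * n : R) • (toEnd R L M e ^ n) m := by
  induction n with
  | zero => simp
  | succ n ih =>
    simp only [pow_succ', Module.End.mul_apply, toEnd_apply_apply]
    rw [lie_h_lie_e (R := R) t, ih, lie_add, lie_smul]
    push_cast
    module

lemma lie_h_pow_toEnd_f_apply (t : IsSl2Triple h e f) (n : ℕ) (m : M) :
    ⁅h, (toEnd R L M f ^ n) m⁆ =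
      (toEnd R L M f ^ n) ⁅h, m⁆ - (2 * n : R) • (toEnd R L M f ^ n) m := by
  have := lie_h_pow_toEnd_e_apply (R := R) t.symm n m
  rw [neg_lie, neg_lie, map_neg, neg_eq_iff_eq_neg] at this
  rw [this]
  abel

lemma lie_e_pow_succ_toEnd_f_apply (t : IsSl2Triple h e f) (n : ℕ) (m : M) :
    ⁅e, (toEnd R L M f ^ (n + 1)) m⁆ =
      (toEnd R L M f ^ (n + 1)) ⁅e, m⁆ +
        (n + 1 : R) • (toEnd R L M f ^ n) (⁅h, m⁆ - (n : R) • m) := by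
  induction n with
  | zero => simp [leibniz_lie e, t.lie_e_f, add_comm]
  | succ n ih =>
    rw [pow_succ' _ (n + 1), Module.End.mul_apply, toEnd_apply_apply, leibniz_lie, t.lie_e_f, ih,
      lie_h_pow_toEnd_f_apply (R := R) t, lie_add, lie_smul]
    simp only [← toEnd_apply_apply R L M f, ← Module.End.mul_apply, ← pow_succ', map_sub, map_smul]
    push_cast
    module

lemma lie_h_lie_f_eq_smul (t : IsSl2Triple h e f) {m : M} {μ : R} (hm : ⁅h, m⁆ = (μ + 2) • m) :
    ⁅h, ⁅f, m⁆⁆ = μ • ⁅f, m⁆ := by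
  have := lie_h_pow_toEnd_f_apply (R := R) t 1 m
  simp only [pow_one, toEnd_apply_apply, hm] at this
  rw [this, lie_smul]
  module

lemma lie_h_pow_toEnd_f_eq_neg_smul (t : IsSl2Triple h e f) {k : ℕ} {m : M}
    (hm : ⁅h, m⁆ = (k : R) • m) :
    ⁅h, (toEnd R L M f ^ k) m⁆ = (-k : R) • (toEnd R L M f ^ k) m := by
  rw [lie_h_pow_toEnd_f_apply (R := R) t, hm, map_smul]
  module

lemma pow_toEnd_f_mem_inf_eigenspace (t : IsSl2Triple h e f) {W : Submodule R M}
    (hf : ∀ m ∈ W, ⁅f, m⁆ ∈ W) (k : ℕ) :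
    ∀ m ∈ W ⊓ (toEnd R L M h).eigenspace (k : R),
      (toEnd R L M f ^ k) m ∈ W ⊓ (toEnd R L M h).eigenspace (-k : R) := by
  rintro m ⟨hmW, hm⟩
  exact ⟨Module.End.pow_apply_mem_of_forall_mem k hf m hmW, Module.End.mem_eigenspace_iff.2
    (lie_h_pow_toEnd_f_eq_neg_smul t (Module.End.mem_eigenspace_iff.1 hm))⟩

end Commutation

section Weights

attribute [local instance] LieRing.ofAssociativeRing

variable {K L M : Type*} [Field K] [CharZero K] [LieRing L] [LieAlgebra K L]
  [AddCommGroup M] [Module K M] [LieRingModule L M] [LieModule K L M] {h e f : L}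

lemma pow_toEnd_f_lie_h_sub_smul_eq_zero (t : IsSl2Triple h e f) {n : ℕ} {m : M}
    (he : ⁅e, m⁆ = 0) (hf : (toEnd K L M f ^ (n + 1)) m = 0) :
    (toEnd K L M f ^ n) (⁅h, m⁆ - (n : K) • m) = 0 := by
  have := lie_e_pow_succ_toEnd_f_apply (R := K) t n m
  rw [hf, he, lie_zero, map_zero, zero_add] at this
  exact (smul_eq_zero.1 this.symm).resolve_left (Nat.cast_add_one_ne_zero n)

variable [FiniteDimensional K M]

/- The powers `eⁿ` are eigenvectors of `ad h` on `End K M` with distinct eigenvalues `2n`, so only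
finitely many of them are nonzero. -/
lemma isNilpotent_toEnd_e (t : IsSl2Triple h e f) : IsNilpotent (toEnd K L M e) := by
  by_contra! hne
  let adH := LieAlgebra.ad K (Module.End K M) (toEnd K L M h)
  have hpow (n : ℕ) : adH (toEnd K L M e ^ n) = (2 * n : K) • toEnd K L M e ^ n := by
    ext m
    simp [adH, LieRing.of_associative_ring_bracket,
      lie_h_pow_toEnd_e_apply (R := K) t]
  have hev (n : ℕ) : adH.HasEigenvalue (2 * n : K) :=
    Module.End.hasEigenvalue_of_hasEigenvector
      ⟨Module.End.mem_eigenspace_iff.2 (hpow n), fun h0 ↦ hne ⟨n, h0⟩⟩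
  refine Set.infinite_of_injective_forall_mem (f := fun n : ℕ ↦ (2 * n : K)) (fun a b hab ↦ ?_) hev
    adH.finite_hasEigenvalue
  simpa using hab

lemma isNilpotent_toEnd_f (t : IsSl2Triple h e f) : IsNilpotent (toEnd K L M f) :=
  isNilpotent_toEnd_e t.symm

lemma exists_hasPrimitiveVectorWith_pow_toEnd_e (t : IsSl2Triple h e f) {m : M} {μ : K}
    (hm : ⁅h, m⁆ = μ • m) (hm0 : m ≠ 0) :
    ∃ n : ℕ, t.HasPrimitiveVectorWith ((toEnd K L M e ^ n) m) (μ + 2 * n) := by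
  obtain ⟨r, hr⟩ := isNilpotent_toEnd_e (K := K) (M := M) t
  obtain ⟨n, hn, hn'⟩ := Nat.exists_not_and_succ_of_not_zero_of_exists
    (p := fun n ↦ (toEnd K L M e ^ n) m = 0) hm0 ⟨r, by simp [hr]⟩
  exact ⟨n, hn, t.lie_h_pow_toEnd_e hm n, by rwa [IsSl2Triple.lie_e_pow_toEnd_e]⟩

lemma exists_int_of_lie_h_eq_smul (t : IsSl2Triple h e f) {m : M} {μ : K}
    (hm : ⁅h, m⁆ = μ • m) (hm0 : m ≠ 0) : ∃ k : ℤ, μ = k := by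
  obtain ⟨n, P⟩ := exists_hasPrimitiveVectorWith_pow_toEnd_e t hm hm0
  obtain ⟨l, hl⟩ := P.exists_nat
  exact ⟨l - 2 * n, by push_cast; rw [← hl]; ring⟩

lemma eq_zero_of_pow_toEnd_f_eq_zero (t : IsSl2Triple h e f) {k : ℕ} {m : M}
    (hm : ⁅h, m⁆ = (k : K) • m) (hf : (toEnd K L M f ^ k) m = 0) : m = 0 := by
  obtain ⟨r, hr⟩ := isNilpotent_toEnd_e (K := K) (M := M) t
  replace hr : (toEnd K L M e ^ r) m = 0 := by simp [hr]
  induction r generalizing m k with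
  | zero => simpa using hr
  | succ r ih =>
    have hem : ⁅e, m⁆ = 0 := by
      refine ih (k := k + 1 + 1) ?_ ?_ (by rwa [pow_succ, Module.End.mul_apply] at hr)
      · rw [lie_h_lie_e (R := K) t, hm, lie_smul]
        push_cast
        module
      · have := lie_e_pow_succ_toEnd_f_apply (R := K) t (k + 1) m
        rw [hm, ← sub_smul, map_smul, Module.End.pow_map_zero_of_le (by lia) hf,
          Module.End.pow_map_zero_of_le (by lia) hf] at this
        simpa using this.symm
    by_contra hm0
    exact (IsSl2Triple.HasPrimitiveVectorWith.mk (t := t) hm0 hm hem).pow_toEnd_f_ne_zero_of_eq_nat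
      rfl le_rfl hf

lemma lie_e_eq_zero_of_pow_succ_toEnd_f_eq_zero (t : IsSl2Triple h e f) {k : ℕ} {m : M}
    (hem : ⁅h, ⁅e, m⁆⁆ = (k + 2 : K) • ⁅e, m⁆) (hm : (toEnd K L M f ^ (k + 1)) m = 0)
    (hhm : (toEnd K L M f ^ (k + 1)) ⁅h, m⁆ = 0) : ⁅e, m⁆ = 0 := by
  refine eq_zero_of_pow_toEnd_f_eq_zero (K := K) (k := k + 1 + 1) t (by exact_mod_cast hem) ?_
  have := lie_e_pow_succ_toEnd_f_apply (R := K) t (k + 1) m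
  rw [Module.End.pow_map_zero_of_le (Nat.le_succ _) hm] at this
  simpa [hm, hhm] using this.symm

lemma injective_restrict_pow_toEnd_f (t : IsSl2Triple h e f) {W : Submodule K M}
    (hf : ∀ m ∈ W, ⁅f, m⁆ ∈ W) (k : ℕ) :
    Function.Injective
      ((toEnd K L M f ^ k).restrict (pow_toEnd_f_mem_inf_eigenspace t hf k)) := by
  refine (injective_iff_map_eq_zero _).2 fun m hm ↦ Subtype.ext ?_
  exact eq_zero_of_pow_toEnd_f_eq_zero t (Module.End.mem_eigenspace_iff.1 m.2.2)
    (congrArg Subtype.val hm)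

lemma finrank_inf_eigenspace_le_neg (t : IsSl2Triple h e f) {W : Submodule K M}
    (hf : ∀ m ∈ W, ⁅f, m⁆ ∈ W) (k : ℕ) :
    finrank K ↥(W ⊓ (toEnd K L M h).eigenspace (k : K)) ≤
      finrank K ↥(W ⊓ (toEnd K L M h).eigenspace (-k : K)) :=
  LinearMap.finrank_le_finrank_of_injective (injective_restrict_pow_toEnd_f t hf k)

lemma exists_pow_toEnd_f_eq (t : IsSl2Triple h e f) {W : Submodule K M}
    (hf : ∀ m ∈ W, ⁅f, m⁆ ∈ W) {k : ℕ}
    (hdim : finrank K ↥(W ⊓ (toEnd K L M h).eigenspace (-k : K)) ≤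
      finrank K ↥(W ⊓ (toEnd K L M h).eigenspace (k : K)))
    {m : M} (hmW : m ∈ W) (hm : ⁅h, m⁆ = (-k : K) • m) :
    ∃ u ∈ W, ⁅h, u⁆ = (k : K) • u ∧ (toEnd K L M f ^ k) u = m := by
  have hsurj := (LinearMap.injective_iff_surjective_of_finrank_eq_finrank
    ((finrank_inf_eigenspace_le_neg t hf k).antisymm hdim)).1
    (injective_restrict_pow_toEnd_f t hf k)
  obtain ⟨⟨u, huW, hu⟩, hum⟩ := hsurj ⟨m, hmW, Module.End.mem_eigenspace_iff.2 hm⟩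
  exact ⟨u, huW, Module.End.mem_eigenspace_iff.1 hu, congrArg Subtype.val hum⟩

lemma exists_pow_succ_toEnd_f_sub_eq_zero (t : IsSl2Triple h e f) {W : Submodule K M}
    (hf : ∀ m ∈ W, ⁅f, m⁆ ∈ W) {k : ℕ}
    (hdim : finrank K ↥(W ⊓ (toEnd K L M h).eigenspace (-(k + 2 : ℕ) : K)) ≤
      finrank K ↥(W ⊓ (toEnd K L M h).eigenspace ((k + 2 : ℕ) : K)))
    {m : M} (hmW : m ∈ W)
    (hm : (toEnd K L M f ^ (k + 1)) ⁅h, m⁆ = (k : K) • (toEnd K L M f ^ (k + 1)) m) :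
    ∃ u ∈ W, ⁅h, u⁆ = (k + 2 : K) • u ∧ (toEnd K L M f ^ (k + 1)) (m - ⁅f, u⁆) = 0 := by
  obtain ⟨u, huW, hu, hum⟩ := exists_pow_toEnd_f_eq t hf hdim
    (Module.End.pow_apply_mem_of_forall_mem (k + 1) hf m hmW) (by
      change ⁅h, (toEnd K L M f ^ (k + 1)) m⁆ = _
      rw [lie_h_pow_toEnd_f_apply (R := K) t, hm]
      push_cast
      module)
  refine ⟨u, huW, by exact_mod_cast hu, ?_⟩
  rw [map_sub, ← hum, pow_succ _ (k + 1), Module.End.mul_apply, toEnd_apply_apply, sub_self]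

lemma finrank_eigenspace_neg_le (t : IsSl2Triple h e f) (k : ℕ) :
    finrank K ↥(⊤ ⊓ (toEnd K L M h).eigenspace (-k : K)) ≤
      finrank K ↥(⊤ ⊓ (toEnd K L M h).eigenspace (k : K)) := by
  have hneg (μ : K) : (toEnd K L M (-h)).eigenspace μ = (toEnd K L M h).eigenspace (-μ) := by
    ext m
    simp [neg_eq_iff_eq_neg]
  have := finrank_inf_eigenspace_le_neg (K := K) (M := M) (W := ⊤) t.symm (by simp) k
  rwa [hneg, hneg, neg_neg] at this

/- After subtracting an element of `f M`, the generalized eigenvector `x` is killed by `e` and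
`fᵏ⁺¹`, and then `(k + 1) fᵏ y = e fᵏ⁺¹ x = 0`. -/
lemma not_hasPrimitiveVectorWith_of_lie_h_eq_smul_add (t : IsSl2Triple h e f) {x y : M} {k : ℕ}
    (hx : ⁅h, x⁆ = (k : K) • x + y) : ¬ t.HasPrimitiveVectorWith y (k : K) := by
  intro P
  have hfy : (toEnd K L M f ^ (k + 1)) y = 0 := P.pow_toEnd_f_eq_zero_of_eq_nat rfl
  obtain ⟨u, -, hu, hxu⟩ := exists_pow_succ_toEnd_f_sub_eq_zero (K := K) (k := k) (m := x) t
    (W := ⊤) (by simp) (finrank_eigenspace_neg_le t _) (by simp) (by simp [hx, hfy])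
  set x' := x - ⁅f, u⁆ with hx'
  have hhx' : ⁅h, x'⁆ = (k : K) • x' + y := by
    rw [hx', lie_sub, hx, lie_h_lie_f_eq_smul t hu]
    module
  have hex' : ⁅e, x'⁆ = 0 := by
    refine lie_e_eq_zero_of_pow_succ_toEnd_f_eq_zero (K := K) t ?_ hxu (by simp [hhx', hxu, hfy])
    rw [lie_h_lie_e (R := K) t, hhx', lie_add, lie_smul, P.lie_e]
    module
  have hfky : (toEnd K L M f ^ k) y = 0 := by
    simpa [hhx'] using pow_toEnd_f_lie_h_sub_smul_eq_zero (K := K) t hex' hxu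
  exact P.pow_toEnd_f_ne_zero_of_eq_nat rfl le_rfl hfky

lemma eq_zero_of_lie_h_eq_smul_add (t : IsSl2Triple h e f) {x y : M} {μ : K}
    (hx : ⁅h, x⁆ = μ • x + y) (hy : ⁅h, y⁆ = μ • y) : y = 0 := by
  by_contra hy0
  obtain ⟨n, P⟩ := exists_hasPrimitiveVectorWith_pow_toEnd_e t hy hy0
  obtain ⟨k, hk⟩ := P.exists_nat
  rw [hk] at P
  refine not_hasPrimitiveVectorWith_of_lie_h_eq_smul_add t (x := (toEnd K L M e ^ n) x) ?_ P
  rw [lie_h_pow_toEnd_e_apply (R := K) t, hx, ← hk, map_add, map_smul]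
  module

lemma mem_iSup_eigenspace_of_lie_h_sub_smul_mem (t : IsSl2Triple h e f) {m : M} {μ : K}
    (hm : ⁅h, m⁆ - μ • m ∈ ⨆ ν, (toEnd K L M h).eigenspace ν) :
    m ∈ ⨆ ν, (toEnd K L M h).eigenspace ν := by
  set S := ⨆ ν, (toEnd K L M h).eigenspace ν
  have hle (ν : K) : (toEnd K L M h).eigenspace ν ≤ S := le_iSup _ ν
  suffices S ≤ S.map (toEnd K L M h - μ • 1) ⊔ (toEnd K L M h).eigenspace μ by
    obtain ⟨_, ⟨s, hs, rfl⟩, y, hy, hsy⟩ := Submodule.mem_sup.1 (this hm)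
    have hms : ⁅h, m - s⁆ = μ • (m - s) + y := by
      simp only [LinearMap.sub_apply, LinearMap.smul_apply, Module.End.one_apply,
        toEnd_apply_apply] at hsy
      rw [lie_sub, eq_add_of_sub_eq hsy.symm]
      module
    have hy0 := eq_zero_of_lie_h_eq_smul_add t hms (Module.End.mem_eigenspace_iff.1 hy)
    rw [hy0, add_zero] at hms
    simpa using add_mem (hle μ (Module.End.mem_eigenspace_iff.2 hms)) hs
  refine iSup_le fun ν w hw ↦ ?_
  obtain rfl | hνμ := eq_or_ne ν μ
  · exact Submodule.mem_sup_right hw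
  · refine Submodule.mem_sup_left ⟨(ν - μ)⁻¹ • w, S.smul_mem _ (hle ν hw), ?_⟩
    have hw' : ⁅h, w⁆ = ν • w := Module.End.mem_eigenspace_iff.1 hw
    simp [hw', ← sub_smul, smul_smul, sub_ne_zero.2 hνμ]

/- The operator `h - (n - 2r)` maps `{m | eʳ⁺¹ m = 0, fⁿ⁺¹ eʳ m = 0}` to
`{m | eʳ⁺¹ m = 0, fⁿ eʳ m = 0}`, which for `n = 0` is `{m | eʳ m = 0}`. -/
lemma iSup_eigenspace_toEnd_h (t : IsSl2Triple h e f) :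
    ⨆ μ, (toEnd K L M h).eigenspace μ = ⊤ := by
  suffices H : ∀ (r : ℕ) (m : M), (toEnd K L M e ^ r) m = 0 →
      m ∈ ⨆ μ, (toEnd K L M h).eigenspace μ by
    obtain ⟨r, hr⟩ := isNilpotent_toEnd_e (K := K) (M := M) t
    exact eq_top_iff.2 fun m _ ↦ H r m (by simp [hr])
  intro r
  induction r with
  | zero => simp +contextual
  | succ r ihr =>
    suffices H : ∀ (n : ℕ) (m : M), (toEnd K L M e ^ (r + 1)) m = 0 →
        (toEnd K L M f ^ n) ((toEnd K L M e ^ r) m) = 0 →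
          m ∈ ⨆ μ, (toEnd K L M h).eigenspace μ by
      obtain ⟨n, hn⟩ := isNilpotent_toEnd_f (K := K) (M := M) t
      exact fun m hm ↦ H n m hm (by simp [hn])
    intro n
    induction n with
    | zero => exact fun m _ hm ↦ ihr m (by simpa using hm)
    | succ n ihn =>
      intro m hem hfm
      refine mem_iSup_eigenspace_of_lie_h_sub_smul_mem t (μ := (n - 2 * r : K)) (ihn _ ?_ ?_)
      · have := lie_h_pow_toEnd_e_apply (R := K) t (r + 1) m
        rw [hem, lie_zero, smul_zero, add_zero] at this
        simp [hem, ← this]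
      · have hle : ⁅e, (toEnd K L M e ^ r) m⁆ = 0 := by rwa [IsSl2Triple.lie_e_pow_toEnd_e]
        have := pow_toEnd_f_lie_h_sub_smul_eq_zero (K := K) t hle hfm
        rw [lie_h_pow_toEnd_e_apply (R := K) t] at this
        convert this using 2
        rw [map_sub, map_smul]
        module

lemma lie_e_mem_of_lie_h_eq_natCast_smul (t : IsSl2Triple h e f) {W : Submodule K M}
    (hf : ∀ m ∈ W, ⁅f, m⁆ ∈ W)
    (hdim : ∀ k : ℕ, finrank K ↥(W ⊓ (toEnd K L M h).eigenspace (-k : K)) ≤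
      finrank K ↥(W ⊓ (toEnd K L M h).eigenspace (k : K)))
    {k : ℕ} {m : M} (hmW : m ∈ W) (hm : ⁅h, m⁆ = (k : K) • m) : ⁅e, m⁆ ∈ W := by
  obtain ⟨N, hN⟩ := isNilpotent_toEnd_f (K := K) (M := M) t
  obtain ⟨d, hd⟩ : ∃ d, N ≤ k + d := ⟨N, Nat.le_add_left N k⟩
  induction d generalizing k m with
  | zero =>
    have hm0 : m = 0 :=
      eq_zero_of_pow_toEnd_f_eq_zero t hm (by simp [pow_eq_zero_of_le (by lia : N ≤ k) hN])
    simp [hm0]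
  | succ d ih =>
    obtain ⟨u, huW, hu, hmu⟩ := exists_pow_succ_toEnd_f_sub_eq_zero t hf (hdim (k + 2)) hmW
      (by rw [hm, map_smul])
    have hhmu : ⁅h, m - ⁅f, u⁆⁆ = (k : K) • (m - ⁅f, u⁆) := by
      rw [lie_sub, hm, lie_h_lie_f_eq_smul t hu, smul_sub]
    have hemu : ⁅e, m - ⁅f, u⁆⁆ = 0 := by
      refine lie_e_eq_zero_of_pow_succ_toEnd_f_eq_zero (K := K) t ?_ hmu (by simp [hhmu, hmu])
      rw [lie_h_lie_e (R := K) t, hhmu, lie_smul, add_smul]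
    have hem : ⁅e, m⁆ = (k + 2 : K) • u + ⁅f, ⁅e, u⁆⁆ := by
      rw [lie_sub, sub_eq_zero] at hemu
      rw [hemu, leibniz_lie, t.lie_e_f, hu]
    rw [hem]
    exact add_mem (W.smul_mem _ huW) (hf _ (ih huW (by exact_mod_cast hu) (by lia)))

lemma lie_e_mem_of_lie_h_eq_smul (t : IsSl2Triple h e f) {W : Submodule K M}
    (hf : ∀ m ∈ W, ⁅f, m⁆ ∈ W)
    (hdim : ∀ k : ℕ, finrank K ↥(W ⊓ (toEnd K L M h).eigenspace (-k : K)) ≤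
      finrank K ↥(W ⊓ (toEnd K L M h).eigenspace (k : K)))
    {m : M} (hmW : m ∈ W) {μ : K} (hm : ⁅h, m⁆ = μ • m) : ⁅e, m⁆ ∈ W := by
  obtain rfl | hm0 := eq_or_ne m 0
  · simp
  obtain ⟨k, rfl⟩ := exists_int_of_lie_h_eq_smul t hm hm0
  obtain ⟨n, rfl | rfl⟩ := k.eq_nat_or_neg
  · exact lie_e_mem_of_lie_h_eq_natCast_smul t hf hdim hmW (by simpa using hm)
  obtain ⟨u, huW, hu, rfl⟩ := exists_pow_toEnd_f_eq t hf (hdim n) hmW (by simpa using hm)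
  have heu : ⁅e, u⁆ ∈ W := lie_e_mem_of_lie_h_eq_natCast_smul t hf hdim huW hu
  cases n with
  | zero => simpa using heu
  | succ n =>
    have hpow (j : ℕ) {w : M} : w ∈ W → (toEnd K L M f ^ j) w ∈ W :=
      Module.End.pow_apply_mem_of_forall_mem j hf w
    rw [lie_e_pow_succ_toEnd_f_apply (R := K) t, hu, ← sub_smul]
    exact add_mem (hpow _ heu) (W.smul_mem _ (hpow _ (W.smul_mem _ huW)))

theorem lie_e_mem_of_finrank_inf_eigenspace_neg_le (t : IsSl2Triple h e f) {W : Submodule K M}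
    (hf : ∀ m ∈ W, ⁅f, m⁆ ∈ W) (hh : ∀ m ∈ W, ⁅h, m⁆ ∈ W)
    (hdim : ∀ k : ℕ, finrank K ↥(W ⊓ (toEnd K L M h).eigenspace (-k : K)) ≤
      finrank K ↥(W ⊓ (toEnd K L M h).eigenspace (k : K))) :
    ∀ m ∈ W, ⁅e, m⁆ ∈ W := by
  suffices W ≤ W.comap (toEnd K L M e) from this
  exact (Submodule.eq_iSup_inf_genEigenspace 1 hh (iSup_eigenspace_toEnd_h t)).trans_le
    (iSup_le fun μ m hm ↦ lie_e_mem_of_lie_h_eq_smul t hf hdim hm.1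
      (Module.End.mem_eigenspace_iff.1 hm.2))

end Weights

end Sl2Module

attribute [local instance] LieRing.ofAssociativeRing in
theorem weight_symmetric_b_submodule_is_submodule_general
    {K V : Type*} [Field K] [CharZero K] [AddCommGroup V] [Module K V] [FiniteDimensional K V]
    {E F H : Module.End K V}
    (hEF : E * F - F * E = H)
    (hHE : H * E - E * H = (2 : K) • E)
    (hHF : H * F - F * H = (-2 : K) • F)
    {V' : Submodule K V}
    (hF : ∀ v ∈ V', F v ∈ V')
    (hH : ∀ v ∈ V', H v ∈ V')
    (hdim : ∀ k : ℕ,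
      finrank K ↥(V' ⊓ Module.End.eigenspace H (-k : K)) ≤
        finrank K ↥(V' ⊓ Module.End.eigenspace H (k : K))) :
    ∀ v ∈ V', E v ∈ V' := by
  obtain rfl | hH0 := eq_or_ne H 0
  · have hE : E = 0 := by simpa [eq_comm] using hHE
    simp [hE]
  have t : IsSl2Triple H E F :=
    { h_ne_zero := hH0
      lie_e_f := hEF
      lie_h_e_nsmul := by rw [LieRing.of_associative_ring_bracket, hHE, ofNat_smul_eq_nsmul]
      lie_h_f_nsmul := by
        rw [LieRing.of_associative_ring_bracket, hHF, neg_smul, ofNat_smul_eq_nsmul] }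
  exact Sl2Module.lie_e_mem_of_finrank_inf_eigenspace_neg_le t hF hH hdim

/-- A `𝔟⁻`-stable, weight-symmetric subspace of a finite-dimensional `𝔰𝔩₂(ℂ)`-representation
is stable under `e` as well. -/
theorem weight_symmetric_b_submodule_is_submodule
    (V : Type*) [AddCommGroup V] [Module ℂ V] [FiniteDimensional ℂ V]
    (E F H : Module.End ℂ V)
    (hEF : E * F - F * E = H)
    (hHE : H * E - E * H = (2 : ℂ) • E)
    (hHF : H * F - F * H = (-2 : ℂ) • F)
    (V' : Submodule ℂ V)
    (hF : ∀ v ∈ V', F v ∈ V')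
    (hH : ∀ v ∈ V', H v ∈ V')
    (hsymm : ∀ k : ℤ,
      Module.finrank ℂ ↥(V' ⊓ Module.End.eigenspace H (k : ℂ)) =
        Module.finrank ℂ ↥(V' ⊓ Module.End.eigenspace H (-k : ℂ))) :
    ∀ v ∈ V', E v ∈ V' :=
  weight_symmetric_b_submodule_is_submodule_general hEF hHE hHF hF hH
    fun k ↦ Int.cast_natCast (R := ℂ) k ▸ (hsymm k).ge
end

section
/- The Schubert polynomial 𝔖_σ is a single monomial if and only if σ avoids the pattern 132. -/
open Equiv MvPolynomial

/-- Coxeter length: minimal length of a word in adjacent transpositions. -/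
noncomputable def len {n : ℕ} (σ : Equiv.Perm (Fin (n+1))) : ℕ :=
  sInf {k | ∃ l : List (Fin n), l.length = k ∧ (l.map simpleT).prod = σ}

/-- `S` is the family of Schubert polynomials. -/
def IsSchubertFamily {n : ℕ} (S : Equiv.Perm (Fin (n+1)) → MvPolynomial (Fin (n+1)) ℂ) : Prop :=
  S Fin.revPerm = ∏ i : Fin (n+1), X i ^ (n - (i : ℕ)) ∧
  ∀ (σ : Equiv.Perm (Fin (n+1))) (i : Fin n), len σ = len (simpleT i * σ) + 1 →
    (X i.castSucc - X i.succ) * S (simpleT i * σ) =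
      S σ - rename (Equiv.swap i.castSucc i.succ) (S σ)

/-!
Since `simpleT i` acts on `σ` from the left, the recursion is read on `w = σ⁻¹`: at an ascent `i` of
`w`, the polynomial of `w` is a divided difference of the polynomial of `w * simpleT i`, and the
Lehmer code of `w * simpleT i` is that of `w` with two adjacent entries exchanged and one of them
raised by `1`.

The code is weakly decreasing exactly when `w` avoids 132. In that case, going up through the first
ascent keeps the code weakly decreasing, and the divided difference of a monomial whose two
exponents differ by `1` is again a monomial. Conversely, the degree in each variable is bounded by
the staircase `n - k`, and going up through the last ascent shows that the Lehmer code of `w` always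
occurs as an exponent, with coefficient `1`. A divided difference is symmetric in its two variables,
so if the polynomial is a monomial, the code takes equal values across each ascent of `w`; across a
descent it always drops.
-/

section DividedDifference

variable {ι R : Type*} [CommRing R] {a b : ι}

theorem X_sub_X_ne_zero [Nontrivial R] (hab : a ≠ b) : (X a - X b : MvPolynomial ι R) ≠ 0 :=
  sub_ne_zero.2 fun h => hab (X_injective h)

variable [DecidableEq ι]

/-- `g` is the divided difference `(f - s f) / (X a - X b)` of `f`, where `s` exchanges the
variables `X a` and `X b`. The quotient is encoded by clearing the denominator. -/
def IsDividedDifference (a b : ι) (f g : MvPolynomial ι R) : Prop :=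
  (X a - X b) * g = f - rename (swap a b) f

theorem degreeOf_rename_swap (a b k : ι) (p : MvPolynomial ι R) :
    degreeOf k (rename (swap a b) p) = degreeOf (swap a b k) p := by
  conv_lhs => rw [← swap_apply_self a b k]
  exact degreeOf_rename_of_injective (swap a b).injective _

theorem mapDomain_swap_eq_self {M : Type*} [AddCommMonoid M] {d : ι →₀ M} (h : d a = d b) :
    d.mapDomain (swap a b) = d := by
  ext k
  rw [Finsupp.mapDomain_equiv_apply, symm_swap, swap_apply_def]
  split_ifs with hka hkb
  · rw [hka, h]
  · rw [hkb, h]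
  · rfl

theorem isDividedDifference_monomial {d : ι →₀ ℕ} (h : d a = d b) (r : R) :
    IsDividedDifference a b (monomial (d + Finsupp.single a 1) r) (monomial d r) := by
  rw [IsDividedDifference, rename_monomial, Finsupp.mapDomain_add, mapDomain_swap_eq_self h,
    Finsupp.mapDomain_single, swap_apply_left, sub_mul]
  simp only [X, monomial_mul, one_mul, add_comm]

namespace IsDividedDifference

variable {f g g' : MvPolynomial ι R}

theorem unique [IsDomain R] (hab : a ≠ b) (hg : IsDividedDifference a b f g)
    (hg' : IsDividedDifference a b f g') : g = g' :=
  mul_left_cancel₀ (X_sub_X_ne_zero hab) (hg.trans hg'.symm)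

theorem rename_swap [IsDomain R] (hab : a ≠ b) (h : IsDividedDifference a b f g) :
    rename (swap a b) g = g := by
  have hinv : ∀ p : MvPolynomial ι R, rename (swap a b) (rename (swap a b) p) = p := fun p => by
    rw [rename_rename, ← Perm.coe_mul, swap_mul_self, Perm.coe_one, rename_id_apply]
  have hs := congrArg (rename (swap a b)) h
  simp only [map_mul, map_sub, rename_X, swap_apply_left, swap_apply_right, hinv] at hs
  refine unique hab (f := f) ?_ h
  rw [IsDividedDifference]
  linear_combination -hs

theorem degreeOf_left_eq_right [IsDomain R] (hab : a ≠ b) (h : IsDividedDifference a b f g) :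
    degreeOf a g = degreeOf b g := by
  have := degreeOf_rename_swap a b b g
  rwa [h.rename_swap hab, swap_apply_right, eq_comm] at this

theorem degreeOf_add_degreeOf_le [IsDomain R] (hab : a ≠ b) (h : IsDividedDifference a b f g)
    (hg : g ≠ 0) (k : ι) :
    degreeOf k (X a - X b : MvPolynomial ι R) + degreeOf k g ≤
      max (degreeOf k f) (degreeOf (swap a b k) f) := by
  have hrel : (X a - X b) * g = f - rename (swap a b) f := h
  rw [← degreeOf_mul_eq (X_sub_X_ne_zero hab) hg, hrel, ← degreeOf_rename_swap]
  exact degreeOf_sub_le k _ _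

theorem degreeOf_le_of_ne [IsDomain R] (hab : a ≠ b) (h : IsDividedDifference a b f g) {k : ι}
    (hka : k ≠ a) (hkb : k ≠ b) : degreeOf k g ≤ degreeOf k f := by
  rcases eq_or_ne g 0 with rfl | hg
  · simp
  · have := h.degreeOf_add_degreeOf_le hab hg k
    rw [swap_apply_of_ne_of_ne hka hkb, max_self] at this
    exact le_of_add_le_right this

theorem degreeOf_right_le [IsDomain R] (hab : a ≠ b) (h : IsDividedDifference a b f g) :
    degreeOf b g ≤ max (degreeOf a f) (degreeOf b f) - 1 := by
  rcases eq_or_ne g 0 with rfl | hg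
  · simp
  · have hdeg : degreeOf b (X a - X b : MvPolynomial ι R) = 1 := by
      rw [sub_eq_neg_add, degreeOf_add_eq_of_degreeOf_lt] <;>
        simp [degreeOf_neg, degreeOf_X_of_ne hab.symm]
    have := h.degreeOf_add_degreeOf_le hab hg b
    rw [hdeg, swap_apply_right, max_comm] at this
    omega

theorem coeff_eq_of_degreeOf_le (hab : a ≠ b) (h : IsDividedDifference a b f g) {d : ι →₀ ℕ}
    (hf : degreeOf b f ≤ d b) (hg : degreeOf b g ≤ d b) :
    coeff d g = coeff (d.mapDomain (swap a b) + Finsupp.single a 1) f := by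
  have hzero : ∀ {p : MvPolynomial ι R} {e : ι →₀ ℕ},
      degreeOf b p ≤ d b → e b = d b + 1 → coeff e p = 0 := fun hp he => by
    by_contra hne
    have := degreeOf_le_iff.1 hp _ (mem_support_iff.2 hne)
    omega
  have hXa : coeff (Finsupp.single b 1 + d) (X a * g) = 0 := by
    rw [coeff_X_mul']
    split_ifs
    · exact hzero hg (by simp [hab, add_comm])
    · rfl
  have hfd : coeff (Finsupp.single b 1 + d) f = 0 := hzero hf (by simp [add_comm])
  have hswap : (d.mapDomain (swap a b) + Finsupp.single a 1).mapDomain (swap a b) =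
      Finsupp.single b 1 + d := by
    rw [Finsupp.mapDomain_add, ← Finsupp.mapDomain_comp, Finsupp.mapDomain_single,
      swap_apply_left, ← Perm.coe_mul, swap_mul_self, Perm.coe_one, Finsupp.mapDomain_id, add_comm]
  have hcoeff := congrArg (coeff (Finsupp.single b 1 + d)) h
  rw [sub_mul, coeff_sub, coeff_sub, hXa, coeff_X_mul, hfd, ← hswap,
    coeff_rename_mapDomain _ (swap a b).injective] at hcoeff
  simpa using hcoeff

end IsDividedDifference

end DividedDifference

section LehmerCode

variable {ι : Type*} [LinearOrder ι] {a b : ι}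

theorem swap_lt_swap_iff_of_covBy (hab : a ⋖ b) {x y : ι} :
    swap a b x < swap a b y ↔ x < y ∧ ¬(x = a ∧ y = b) ∨ x = b ∧ y = a := by
  have hlt := hab.lt
  have hnb : ∀ j, a < j → b ≤ j := fun j => hab.ge_of_gt
  have hna : ∀ j, j < b → j ≤ a := fun j => hab.le_of_lt
  rw [swap_apply_def, swap_apply_def]
  split_ifs <;> grind

variable [Fintype ι] {w : Perm ι}

/-- The inversions of `w` whose left end is `k`, each given by its right end. -/
def inversionsAt (w : Perm ι) (k : ι) : Finset ι := {j | k < j ∧ w j < w k}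

/-- The Lehmer code of a permutation `w`, whose entry at `k` counts the `j > k` with `w j < w k`.
It is finitely supported so as to be an exponent vector of `MvPolynomial`, and its
`Finsupp.degree` is the number of inversions of `w`. -/
noncomputable def lehmerCode (w : Perm ι) : ι →₀ ℕ :=
  Finsupp.equivFunOnFinite.symm fun k => (inversionsAt w k).card

@[simp]
theorem mem_inversionsAt {j k : ι} : j ∈ inversionsAt w k ↔ k < j ∧ w j < w k := by
  simp [inversionsAt]

theorem lehmerCode_apply (w : Perm ι) (k : ι) : lehmerCode w k = (inversionsAt w k).card := rfl

theorem lehmerCode_one : lehmerCode (1 : Perm ι) = 0 := by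
  ext k
  simpa [lehmerCode_apply, Finset.eq_empty_iff_forall_notMem] using fun j => le_of_lt

theorem lehmerCode_eq_card_Ioi [LocallyFiniteOrderTop ι] {k : ι}
    (h : StrictAntiOn w (Set.Ici k)) : lehmerCode w k = (Finset.Ioi k).card := by
  rw [lehmerCode_apply]
  congr 1
  ext j
  simpa using fun hj : k < j => h Set.self_mem_Ici hj.le hj

theorem lehmerCode_lt_of_lt (hab : a < b) (h : w b < w a) : lehmerCode w b < lehmerCode w a := by
  have hsub : inversionsAt w b ⊆ inversionsAt w a := fun j hj => by
    rw [mem_inversionsAt] at hj ⊢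
    exact ⟨hab.trans hj.1, hj.2.trans h⟩
  exact Finset.card_lt_card ((Finset.ssubset_iff_of_subset hsub).2 ⟨b, by simp [hab, h], by simp⟩)

theorem inversionsAt_subset_of_covBy (hab : a ⋖ b) (h : w a < w b) :
    inversionsAt w a ⊆ inversionsAt w b := by
  intro j hj
  rw [mem_inversionsAt] at hj ⊢
  refine ⟨(hab.ge_of_gt hj.1).lt_of_ne ?_, hj.2.trans h⟩
  rintro rfl
  exact h.not_gt hj.2

theorem lehmerCode_le_of_covBy (hab : a ⋖ b) (h : w a < w b) : lehmerCode w a ≤ lehmerCode w b :=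
  Finset.card_le_card (inversionsAt_subset_of_covBy hab h)

theorem lehmerCode_mul_swap (hab : a ⋖ b) (h : w a < w b) :
    lehmerCode (w * swap a b) =
      (lehmerCode w).mapDomain (swap a b) + Finsupp.single a 1 := by
  ext k
  obtain ⟨m, rfl⟩ := (swap a b).surjective k
  have hreindex : lehmerCode (w * swap a b) (swap a b m) =
      Finset.card {j | swap a b m < swap a b j ∧ w j < w m} := by
    rw [lehmerCode_apply, ← Finset.card_map (swap a b).toEmbedding]
    congr 1
    ext j
    simp [Finset.mem_map_equiv]
  rw [hreindex, Finsupp.add_apply, Finsupp.mapDomain_equiv_apply, symm_swap, swap_apply_self,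
    lehmerCode_apply]
  simp only [swap_lt_swap_iff_of_covBy hab]
  rcases eq_or_ne m b with rfl | hm
  · rw [swap_apply_right, Finsupp.single_eq_same,
      ← Finset.card_insert_of_notMem (a := a) (by simp [hab.lt.le])]
    congr 1
    ext j
    grind [mem_inversionsAt]
  · have hne : swap a b m ≠ a := fun hma => hm <| by simpa using congrArg (swap a b) hma
    rw [Finsupp.single_eq_of_ne hne, add_zero]
    congr 1
    ext j
    grind [mem_inversionsAt]

theorem lehmerCode_eq_of_covBy_of_antitone (hw : Antitone (lehmerCode w)) (hab : a ⋖ b)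
    (h : w a < w b) : lehmerCode w a = lehmerCode w b :=
  (lehmerCode_le_of_covBy hab h).antisymm (hw hab.le)

theorem lehmerCode_mul_swap_of_antitone (hw : Antitone (lehmerCode w)) (hab : a ⋖ b)
    (h : w a < w b) : lehmerCode (w * swap a b) = lehmerCode w + Finsupp.single a 1 := by
  rw [lehmerCode_mul_swap hab h,
    mapDomain_swap_eq_self (lehmerCode_eq_of_covBy_of_antitone hw hab h)]

theorem degree_lehmerCode_mul_swap (hab : a ⋖ b) (h : w a < w b) :
    (lehmerCode (w * swap a b)).degree = (lehmerCode w).degree + 1 := by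
  rw [lehmerCode_mul_swap hab h, map_add, Finsupp.degree_mapDomain, Finsupp.degree_single]

end LehmerCode

section Pattern

variable {m : ℕ} {w : Perm (Fin m)}

theorem contains132_inv : contains132 w⁻¹ ↔ contains132 w := by
  have key : ∀ {v : Perm (Fin m)}, contains132 v → contains132 v⁻¹ := by
    rintro v ⟨i, j, k, hij, hjk, hik, hkj⟩
    exact ⟨v i, v k, v j, hik, hkj, by simpa using hij, by simpa using hjk⟩
  exact ⟨fun h => inv_inv w ▸ key h, key⟩

theorem antitone_lehmerCode_of_not_contains132 (h : ¬contains132 w) :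
    Antitone (lehmerCode w) := by
  refine antitone_iff_forall_lt.2 fun a b hab => ?_
  refine Finset.card_le_card (s := inversionsAt w b) (t := inversionsAt w a) fun j hj => ?_
  rw [mem_inversionsAt] at hj ⊢
  have haj := hab.trans hj.1
  refine ⟨haj, lt_of_not_ge fun hle => h ⟨a, b, j, hab, hj.1, ?_, hj.2⟩⟩
  exact hle.lt_of_ne (w.injective.ne haj.ne)

theorem not_antitone_lehmerCode_of_contains132 (h : contains132 w) :
    ¬Antitone (lehmerCode w) := by
  obtain ⟨i, j, c, hij, hjc, hic, hcj⟩ := h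
  -- The last `a < j` with `w a < w c` is followed by a value above `w c`.
  obtain ⟨a, ⟨haj, hac⟩, hmax⟩ :=
    exists_maximal_of_wellFoundedGT (fun a => a < j ∧ w a < w c) ⟨i, hij, hic⟩
  obtain ⟨b, hab, hbj⟩ := exists_covBy_le_of_lt haj
  have hcb : w c < w b := by
    rcases hbj.eq_or_lt with rfl | hbj
    · exact hcj
    · refine lt_of_not_ge fun hbc => hab.lt.not_ge (hmax ⟨hbj, ?_⟩ hab.le)
      exact hbc.lt_of_ne (w.injective.ne (hbj.trans hjc).ne)
  have hlt : lehmerCode w a < lehmerCode w b := by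
    refine Finset.card_lt_card (Finset.ssubset_iff_of_subset
      (inversionsAt_subset_of_covBy hab (hac.trans hcb)) |>.2 ⟨c, ?_, ?_⟩)
    · simp [hbj.trans_lt hjc, hcb]
    · simp [hac.le]
  exact fun hanti => hlt.not_ge (hanti hab.le)

theorem antitone_lehmerCode_iff : Antitone (lehmerCode w) ↔ ¬contains132 w :=
  ⟨fun h h132 => not_antitone_lehmerCode_of_contains132 h132 h,
    antitone_lehmerCode_of_not_contains132⟩

end Pattern

section Length

variable {n : ℕ} {w : Perm (Fin (n + 1))} {i : Fin n}

theorem castSucc_covBy_succ (i : Fin n) : i.castSucc ⋖ i.succ := by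
  simp [Fin.covBy_iff]

theorem not_castSucc_lt_succ_iff : ¬w i.castSucc < w i.succ ↔ w i.succ < w i.castSucc :=
  not_lt.trans (w.injective.ne (castSucc_covBy_succ i).lt.ne').le_iff_lt

theorem eq_one_of_forall_castSucc_lt_succ (h : ∀ i : Fin n, w i.castSucc < w i.succ) : w = 1 :=
  DFunLike.coe_injective (Fin.strictMono_iff_lt_succ.2 h).eq_id

theorem exists_castSucc_lt_succ (hw : w ≠ Fin.revPerm) :
    ∃ i : Fin n, w i.castSucc < w i.succ := by
  by_contra! h
  have hone : Fin.revPerm * w = 1 := eq_one_of_forall_castSucc_lt_succ fun i => by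
    simpa using not_castSucc_lt_succ_iff.1 (h i).not_gt
  refine hw (mul_left_cancel (a := Fin.revPerm) (hone.trans ?_))
  ext
  simp

theorem mul_simpleT_mul_simpleT (w : Perm (Fin (n + 1))) (i : Fin n) :
    w * simpleT i * simpleT i = w := by
  simp [mul_assoc, simpleT]

theorem simpleT_inv (i : Fin n) : (simpleT i)⁻¹ = simpleT i := swap_inv _ _

theorem degree_lehmerCode_mul_simpleT_of_lt (h : w i.castSucc < w i.succ) :
    (lehmerCode (w * simpleT i)).degree = (lehmerCode w).degree + 1 :=
  degree_lehmerCode_mul_swap (castSucc_covBy_succ i) h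

theorem degree_lehmerCode_mul_simpleT_of_gt (h : w i.succ < w i.castSucc) :
    (lehmerCode w).degree = (lehmerCode (w * simpleT i)).degree + 1 := by
  have hasc : (w * simpleT i) i.castSucc < (w * simpleT i) i.succ := by simpa [simpleT] using h
  rw [← degree_lehmerCode_mul_simpleT_of_lt hasc, mul_simpleT_mul_simpleT]

theorem degree_lehmerCode_inv_prod_le (l : List (Fin n)) :
    (lehmerCode (l.map simpleT).prod⁻¹).degree ≤ l.length := by
  induction l with
  | nil => simp [lehmerCode_one]
  | cons i l ih =>
    rw [List.map_cons, List.prod_cons, mul_inv_rev, simpleT_inv, List.length_cons]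
    by_cases h : (l.map simpleT).prod⁻¹ i.castSucc < (l.map simpleT).prod⁻¹ i.succ
    · have := degree_lehmerCode_mul_simpleT_of_lt h
      omega
    · have := degree_lehmerCode_mul_simpleT_of_gt (not_castSucc_lt_succ_iff.1 h)
      omega

theorem exists_word_length_eq_degree_lehmerCode (w : Perm (Fin (n + 1))) :
    ∃ l : List (Fin n), l.length = (lehmerCode w).degree ∧ (l.map simpleT).prod = w⁻¹ := by
  induction hk : (lehmerCode w).degree generalizing w with
  | zero =>
    refine ⟨[], rfl, ?_⟩
    rw [eq_one_of_forall_castSucc_lt_succ (w := w) fun i => ?_]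
    · simp
    · by_contra h
      have := degree_lehmerCode_mul_simpleT_of_gt (not_castSucc_lt_succ_iff.1 h)
      omega
  | succ k ih =>
    obtain ⟨i, hi⟩ : ∃ i : Fin n, ¬w i.castSucc < w i.succ := by
      by_contra! h
      simp [eq_one_of_forall_castSucc_lt_succ h, lehmerCode_one] at hk
    have := degree_lehmerCode_mul_simpleT_of_gt (not_castSucc_lt_succ_iff.1 hi)
    obtain ⟨l, hl, hprod⟩ := ih (w * simpleT i) (by omega)
    refine ⟨i :: l, by rw [List.length_cons, hl], ?_⟩
    rw [List.map_cons, List.prod_cons, hprod, mul_inv_rev, simpleT_inv, ← mul_assoc]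
    simp [simpleT]

theorem len_inv (w : Perm (Fin (n + 1))) : len w⁻¹ = (lehmerCode w).degree := by
  refine le_antisymm (Nat.sInf_le (exists_word_length_eq_degree_lehmerCode w))
    (le_csInf ⟨_, exists_word_length_eq_degree_lehmerCode w⟩ ?_)
  rintro _ ⟨l, rfl, hl⟩
  simpa [hl] using degree_lehmerCode_inv_prod_le l

theorem ascent_induction {P : Perm (Fin (n + 1)) → Prop} (rev : P Fin.revPerm)
    (step : ∀ w ≠ Fin.revPerm, (∀ i : Fin n, w i.castSucc < w i.succ → P (w * simpleT i)) → P w)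
    (w : Perm (Fin (n + 1))) : P w := by
  let r := InvImage (· > ·) fun w : Perm (Fin (n + 1)) => (lehmerCode w).degree
  have hr : WellFounded r :=
    have : IsTrans _ r := ⟨fun _ _ _ h₁ h₂ => gt_trans h₁ h₂⟩
    have : Std.Irrefl r := ⟨fun _ h => lt_irrefl _ h⟩
    Finite.wellFounded_of_trans_of_irrefl r
  induction w using hr.induction with
  | _ w ih =>
    rcases eq_or_ne w Fin.revPerm with rfl | hw
    · exact rev
    · refine step w hw fun i hi => ih _ ?_
      have := degree_lehmerCode_mul_simpleT_of_lt hi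
      simp only [r, InvImage]
      omega

theorem lehmerCode_revPerm (k : Fin (n + 1)) : lehmerCode Fin.revPerm k = n - k := by
  rw [lehmerCode_eq_card_Ioi, Fin.card_Ioi]
  · omega
  · intro _ _ _ _ h
    simpa using h

theorem lehmerCode_succ_of_maximal_ascent
    (hi : Maximal (fun j : Fin n => w j.castSucc < w j.succ) i) :
    lehmerCode w i.succ = n - (i + 1) := by
  rw [lehmerCode_eq_card_Ioi, Fin.card_Ioi]
  · simp
  · refine strictAntiOn_of_succ_lt Set.ordConnected_Ici fun k hk hik _ => ?_
    obtain ⟨j, rfl⟩ := Fin.exists_castSucc_eq.2 fun h : k = Fin.last n => hk (h ▸ isMax_top)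
    rw [Fin.orderSucc_castSucc]
    exact not_castSucc_lt_succ_iff.1 (hi.not_prop_of_gt (Fin.succ_le_castSucc_iff.1 hik))

theorem antitone_lehmerCode_mul_simpleT (hw : Antitone (lehmerCode w))
    (hi : Minimal (fun j : Fin n => w j.castSucc < w j.succ) i) :
    Antitone (lehmerCode (w * simpleT i)) := by
  rw [simpleT, lehmerCode_mul_swap_of_antitone hw (castSucc_covBy_succ i) hi.prop,
    Fin.antitone_iff_succ_le]
  intro k
  have hle := hw (castSucc_covBy_succ k).le
  rcases eq_or_ne k.succ i.castSucc with hk | hk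
  · have hki : k < i := Fin.succ_le_castSucc_iff.1 hk.le
    have := lehmerCode_lt_of_lt (castSucc_covBy_succ k).lt
      (not_castSucc_lt_succ_iff.1 (hi.not_prop_of_lt hki))
    simp only [Finsupp.add_apply, hk, Finsupp.single_eq_same] at this ⊢
    omega
  · rw [Finsupp.add_apply, Finsupp.single_eq_of_ne hk]
    exact le_add_right hle

end Length

namespace IsSchubertFamily

variable {n : ℕ} {S : Perm (Fin (n + 1)) → MvPolynomial (Fin (n + 1)) ℂ}
  {w : Perm (Fin (n + 1))}

theorem isDividedDifference (hS : IsSchubertFamily S) {i : Fin n} (h : w i.castSucc < w i.succ) :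
    IsDividedDifference i.castSucc i.succ (S (w * simpleT i)⁻¹) (S w⁻¹) := by
  have hinv : simpleT i * (w * simpleT i)⁻¹ = w⁻¹ := by simp
  have hlen : len (w * simpleT i)⁻¹ = len w⁻¹ + 1 := by
    rw [len_inv, len_inv, degree_lehmerCode_mul_simpleT_of_lt h]
  have hrel := hS.2 (w * simpleT i)⁻¹ i
  rw [hinv] at hrel
  exact hrel hlen

theorem revPerm_inv_eq_monomial (hS : IsSchubertFamily S) :
    S Fin.revPerm⁻¹ = monomial (lehmerCode Fin.revPerm) 1 := by
  have hinv : (Fin.revPerm : Perm (Fin (n + 1)))⁻¹ = Fin.revPerm := Fin.revPerm_symm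
  rw [hinv, hS.1, monomial_eq, Finsupp.prod_fintype _ _ (by simp)]
  simp [lehmerCode_revPerm]

theorem degreeOf_le (hS : IsSchubertFamily S) (w : Perm (Fin (n + 1))) (k : Fin (n + 1)) :
    degreeOf k (S w⁻¹) ≤ n - k := by
  induction w using ascent_induction generalizing k with
  | rev => rw [hS.revPerm_inv_eq_monomial, degreeOf_monomial_eq _ _ one_ne_zero, lehmerCode_revPerm]
  | step w hw ih =>
    obtain ⟨i, hi⟩ := exists_castSucc_lt_succ hw
    have hne := (castSucc_covBy_succ i).lt.ne
    have hrel := hS.isDividedDifference hi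
    have hsucc : degreeOf i.succ (S w⁻¹) ≤ n - i.succ := by
      have hcast := ih i hi i.castSucc
      have hright := hrel.degreeOf_right_le hne
      have hsucc := ih i hi i.succ
      rw [Fin.val_castSucc] at hcast
      rw [Fin.val_succ] at hsucc ⊢
      omega
    rcases eq_or_ne k i.succ with rfl | hks
    · exact hsucc
    rcases eq_or_ne k i.castSucc with rfl | hkc
    · rw [hrel.degreeOf_left_eq_right hne]
      exact hsucc.trans (Nat.sub_le_sub_left (castSucc_covBy_succ i).le n)
    · exact (hrel.degreeOf_le_of_ne hne hkc hks).trans (ih i hi k)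

theorem coeff_lehmerCode (hS : IsSchubertFamily S) (w : Perm (Fin (n + 1))) :
    coeff (lehmerCode w) (S w⁻¹) = 1 := by
  induction w using ascent_induction with
  | rev => rw [hS.revPerm_inv_eq_monomial, coeff_monomial, if_pos rfl]
  | step w hw ih =>
    obtain ⟨i, hi⟩ := exists_maximal_of_wellFoundedGT _ (exists_castSucc_lt_succ hw)
    have hcov := castSucc_covBy_succ i
    -- At the last ascent the code attains the staircase bound in `X i.succ`, which kills all but
    -- two of the coefficients in the divided difference relation.
    have hdeg : ∀ v, degreeOf i.succ (S v⁻¹) ≤ lehmerCode w i.succ := fun v => by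
      rw [lehmerCode_succ_of_maximal_ascent hi]
      exact hS.degreeOf_le v i.succ
    rw [(hS.isDividedDifference hi.prop).coeff_eq_of_degreeOf_le hcov.lt.ne (hdeg _) (hdeg w),
      ← lehmerCode_mul_swap hcov hi.prop]
    exact ih i hi.prop

theorem eq_monomial_lehmerCode (hS : IsSchubertFamily S) (hw : Antitone (lehmerCode w)) :
    S w⁻¹ = monomial (lehmerCode w) 1 := by
  induction w using ascent_induction with
  | rev => exact hS.revPerm_inv_eq_monomial
  | step w hne ih =>
    obtain ⟨i, hi⟩ := exists_minimal_of_wellFoundedLT _ (exists_castSucc_lt_succ hne)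
    have hcov := castSucc_covBy_succ i
    have hrel := hS.isDividedDifference hi.prop
    rw [ih i hi.prop (antitone_lehmerCode_mul_simpleT hw hi), simpleT,
      lehmerCode_mul_swap_of_antitone hw hcov hi.prop] at hrel
    have heq := lehmerCode_eq_of_covBy_of_antitone hw hcov hi.prop
    exact hrel.unique hcov.lt.ne (isDividedDifference_monomial heq 1)

theorem antitone_lehmerCode_of_eq_monomial (hS : IsSchubertFamily S) {d : Fin (n + 1) →₀ ℕ} {c : ℂ}
    (h : S w⁻¹ = monomial d c) : Antitone (lehmerCode w) := by
  have hcoeff := hS.coeff_lehmerCode w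
  rw [h, coeff_monomial] at hcoeff
  obtain ⟨rfl, rfl⟩ : d = lehmerCode w ∧ c = 1 := by
    split_ifs at hcoeff with hd
    · exact ⟨hd, hcoeff⟩
    · exact absurd hcoeff zero_ne_one
  refine Fin.antitone_iff_succ_le.2 fun i => ?_
  have hcov := castSucc_covBy_succ i
  by_cases hi : w i.castSucc < w i.succ
  · have hsymm := (hS.isDividedDifference hi).rename_swap hcov.lt.ne
    rw [h, rename_monomial, monomial_left_inj one_ne_zero] at hsymm
    have := DFunLike.congr_fun hsymm i.castSucc
    rw [Finsupp.mapDomain_equiv_apply, symm_swap, swap_apply_left] at this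
    exact this.le
  · exact (lehmerCode_lt_of_lt hcov.lt (not_castSucc_lt_succ_iff.1 hi)).le

end IsSchubertFamily

/-- The Schubert polynomial `𝔖_σ` is a single monomial iff `σ` avoids 132. -/
theorem schubert_monomial_iff_avoids_132 {n : ℕ}
    (S : Equiv.Perm (Fin (n+1)) → MvPolynomial (Fin (n+1)) ℂ)
    (hS : IsSchubertFamily S) (σ : Equiv.Perm (Fin (n+1))) :
    (∃ (d : Fin (n+1) →₀ ℕ) (c : ℂ), c ≠ 0 ∧ S σ = monomial d c) ↔ ¬ contains132 σ := by
  rw [← contains132_inv, ← antitone_lehmerCode_iff]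
  constructor
  · rintro ⟨d, c, -, hmon⟩
    exact hS.antitone_lehmerCode_of_eq_monomial (by rwa [inv_inv])
  · intro hanti
    exact ⟨lehmerCode σ⁻¹, 1, one_ne_zero, by simpa using hS.eq_monomial_lehmerCode hanti⟩
end
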